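/- Theorem (no strong universality): the evolution of any 5-state rotation-symmetric number-conserving cellular automaton on the von Neumann neighborhood from a finite initial configuration is ultimately periodic; i.e., for every such automaton A and finite configuration C there exist i < j with Aⁱ(C) = Aʲ(C). -/

import Mathlib

/-- The global map of a von Neumann neighborhood CA with local rule `f`. -/
def glob (f : ℤ → ℤ → ℤ → ℤ → ℤ → ℤ) (C : ℤ × ℤ → ℤ) : ℤ × ℤ → ℤ :=
  fun p => f (C p) (C (p.1, p.2 + 1)) (C (p.1 + 1, p.2)) (C (p.1, p.2 - 1))
    (C (p.1 - 1, p.2))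

/-- The configuration carrying a von Neumann neighborhood around the origin, `q` elsewhere. -/
def crossConfig (q c u r d l : ℤ) : ℤ × ℤ → ℤ := fun p =>
  if p = (0, 0) then c else if p = (0, 1) then u else if p = (1, 0) then r
  else if p = (0, -1) then d else if p = (-1, 0) then l else q

theorem sum_crossConfig (Q : Finset ℤ) (q : ℤ) (hq : q ∈ Q) (f : ℤ → ℤ → ℤ → ℤ → ℤ → ℤ)
    (hquiet : f q q q q q = q)
    (hNC : ∀ C : ℤ × ℤ → ℤ, (∀ p, C p ∈ Q) → {p | C p ≠ q}.Finite →
      ∑ᶠ p, (glob f C p - C p) = 0)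
    {c u r d l : ℤ} (hc : c ∈ Q) (hu : u ∈ Q) (hr : r ∈ Q) (hd : d ∈ Q) (hl : l ∈ Q) :
    (f c u r d l - c) + (f u q q c q - u) + (f r q q q c - r) + (f d c q q q - d)
      + (f l q c q q - l) + (f q q q u q - q) + (f q q q q r - q) + (f q d q q q - q)
      + (f q q l q q - q) + (f q q q r u - q) + (f q r q q d - q) + (f q l d q q - q)
      + (f q q u l q - q) = 0 := by
  have hQ : ∀ p, crossConfig q c u r d l p ∈ Q := by
    intro p; unfold crossConfig; split_ifs <;> assumption
  have hfin : {p | crossConfig q c u r d l p ≠ q}.Finite := by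
    refine Set.Finite.subset
      (({(0, 0), (0, 1), (1, 0), (0, -1), (-1, 0)} : Finset (ℤ × ℤ)).finite_toSet) ?_
    intro p hp
    simp only [Set.mem_ofPred_eq, crossConfig] at hp
    simp only [Finset.coe_insert, Finset.coe_singleton, Set.mem_insert_iff,
      Set.mem_singleton_iff]
    by_contra! h
    simp [h] at hp
  have h := hNC _ hQ hfin
  rw [finsum_eq_sum_of_support_subset (s := ({(0, 0), (0, 1), (1, 0), (0, -1), (-1, 0), (0, 2),
    (2, 0), (0, -2), (-2, 0), (1, 1), (1, -1), (-1, -1), (-1, 1)} : Finset (ℤ × ℤ)))] at h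
  · simp [glob, crossConfig] at h
    linarith
  · rintro ⟨x, y⟩ hp
    rw [Function.mem_support] at hp
    by_contra hs
    apply hp
    simp only [Finset.coe_insert, Finset.coe_singleton, Set.mem_insert_iff,
      Set.mem_singleton_iff, Prod.mk.injEq] at hs
    have key : ∀ a b : ℤ, ¬ (a = 0 ∧ b = 0) → ¬ (a = 0 ∧ b = 1) → ¬ (a = 1 ∧ b = 0) →
        ¬ (a = 0 ∧ b = -1) → ¬ (a = -1 ∧ b = 0) → crossConfig q c u r d l (a, b) = q := by
      intro a b h1 h2 h3 h4 h5
      simp [crossConfig, h1, h2, h3, h4, h5]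
    simp only [glob]
    rw [key x y, key x (y + 1), key (x + 1) y, key x (y - 1), key (x - 1) y, hquiet, sub_self]
    all_goals omega

theorem exists_flows (Q : Finset ℤ) (q : ℤ) (hq : q ∈ Q) (f : ℤ → ℤ → ℤ → ℤ → ℤ → ℤ)
    (hrot : ∀ c u r d l, c ∈ Q → u ∈ Q → r ∈ Q → d ∈ Q → l ∈ Q →
      f c u r d l = f c r d l u)
    (hquiet : f q q q q q = q)
    (hNC : ∀ C : ℤ × ℤ → ℤ, (∀ p, C p ∈ Q) → {p | C p ≠ q}.Finite →
      ∑ᶠ p, (glob f C p - C p) = 0) :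
    ∃ g h : ℤ → ℤ → ℤ, (∀ x ∈ Q, ∀ y ∈ Q, g x y + g y x = 0) ∧
      (∀ x ∈ Q, ∀ y ∈ Q, h x y + h y x = 0) ∧
      ∀ c ∈ Q, ∀ u ∈ Q, ∀ r ∈ Q, ∀ d ∈ Q, ∀ l ∈ Q,
        f c u r d l = c + (g c u + g c r + g c d + g c l)
          + (h u r + h r d + h d l + h l u) := by
  set A : ℤ → ℤ → ℤ := fun x y => f x y q q q - x with hA
  set E : ℤ → ℤ → ℤ := fun x y => f q x y q q - q with hE
  have hA1 : ∀ x ∈ Q, ∀ y ∈ Q, f x q q q y = x + A x y := fun x hx y hy => by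
    simp only [hA]
    rw [hrot x y q q q hx hy hq hq hq]; ring
  have hA2 : ∀ x ∈ Q, ∀ y ∈ Q, f x q q y q = x + A x y := fun x hx y hy => by
    rw [hrot x q q y q hx hq hq hy hq, hrot x q y q q hx hq hy hq hq]; simp only [hA]; ring
  have hA3 : ∀ x ∈ Q, ∀ y ∈ Q, f x q y q q = x + A x y := fun x hx y hy => by
    rw [hrot x q y q q hx hq hy hq hq]; simp only [hA]; ring
  have hE1 : ∀ x ∈ Q, ∀ y ∈ Q, f q y q q x = q + E x y := fun x hx y hy => by
    simp only [hE]
    rw [hrot q x y q q hq hx hy hq hq]; ring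
  have hE2 : ∀ x ∈ Q, ∀ y ∈ Q, f q q q x y = q + E x y := fun x hx y hy => by
    rw [hrot q q q x y hq hq hq hx hy, hrot q q x y q hq hq hx hy hq]; simp only [hE]; ring
  have hE3 : ∀ x ∈ Q, ∀ y ∈ Q, f q q x y q = q + E x y := fun x hx y hy => by
    rw [hrot q q x y q hq hq hx hy hq]; simp only [hE]; ring
  have hA4 : ∀ x y, f x y q q q = x + A x y := fun x y => by simp only [hA]; ring
  have hE4 : ∀ x y, f q x y q q = q + E x y := fun x y => by simp only [hE]; ring
  have main : ∀ c ∈ Q, ∀ u ∈ Q, ∀ r ∈ Q, ∀ d ∈ Q, ∀ l ∈ Q,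
      f c u r d l = c - (A u c + A r c + A d c + A l c) - (A q u + A q r + A q d + A q l)
        - (E r u + E d r + E l d + E u l) := by
    intro c hc u hu r hr d hd l hl
    have h := sum_crossConfig Q q hq f hquiet hNC hc hu hr hd hl
    rw [hA2 u hu c hc, hA1 r hr c hc, hA4 d c, hA3 l hl c hc, hA2 q hq u hu, hA1 q hq r hr,
      hA4 q d, hA3 q hq l hl, hE2 r hr u hu, hE1 d hd r hr, hE4 l d, hE3 u hu l hl] at h
    linarith
  have hAqq : A q q = 0 := by simp [hA, hquiet]
  have hEqq : E q q = 0 := by simp [hE, hquiet]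
  have hEl : ∀ x, E x q = A q x := fun x => rfl
  have hEr : ∀ x ∈ Q, E q x = A q x := fun x hx => by
    have := hA3 q hq x hx
    simp only [hE]; linarith
  have hAA : ∀ x ∈ Q, ∀ y ∈ Q, A x y + A y x + 3 * A q x + 3 * A q y = 0 := by
    intro x hx y hy
    have h := main x hx y hy q hq q hq q hq
    rw [hA4, hEr y hy, hEl y, hAqq, hEqq] at h
    linarith
  have hEE : ∀ x ∈ Q, ∀ y ∈ Q, E x y + E y x = 2 * A q x + 2 * A q y := by
    intro x hx y hy
    have h := main q hq x hx y hy q hq q hq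
    have h1 := hAA x hx q hq
    have h2 := hAA y hy q hq
    rw [hE4, hEr y hy, hEl x, hAqq, hEqq] at h
    linarith
  refine ⟨fun c x => -A x c - 3 * A q x, fun x y => -E y x + A q x + A q y, ?_, ?_, ?_⟩
  · intro x hx y hy
    linarith [hAA x hx y hy]
  · intro x hx y hy
    linarith [hEE x hx y hy]
  · intro c hc u hu r hr d hd l hl
    rw [main c hc u hu r hr d hd l hl]
    ring

/-- The elementary flow: a unit passes from a state `4` to a state `0`. -/
def unitFlow (x y : ℤ) : ℤ :=
  if x = 0 ∧ y = 4 then 1 else if x = 4 ∧ y = 0 then -1 else 0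

/-- The local rule on `{0, …, 4}` with side flow `unitFlow` and diagonal flow `β * unitFlow`. -/
def flowRule (β c u r d l : ℤ) : ℤ :=
  c + (unitFlow c u + unitFlow c r + unitFlow c d + unitFlow c l)
    + β * (unitFlow u r + unitFlow r d + unitFlow d l + unitFlow l u)

theorem unitFlow_swap (x y : ℤ) : unitFlow y x = -unitFlow x y := by
  unfold unitFlow
  by_cases h1 : x = 0 ∧ y = 4
  · simp [h1]
  by_cases h2 : x = 4 ∧ y = 0
  · simp [h2]
  rw [if_neg (by omega), if_neg (by omega), if_neg h1, if_neg h2, neg_zero]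

theorem unitFlow_mid {x y : ℤ} (h : (x ≠ 0 ∧ x ≠ 4) ∨ (y ≠ 0 ∧ y ≠ 4) ∨ x = y) :
    unitFlow x y = 0 := by
  unfold unitFlow; split_ifs <;> omega

theorem flowRule_rotate (β c u r d l : ℤ) : flowRule β c r d l u = flowRule β c u r d l := by
  unfold flowRule; ring

theorem flowRule_reflect (β c u r d l : ℤ) :
    flowRule β c u l d r = flowRule (-β) c u r d l := by
  unfold flowRule
  rw [unitFlow_swap l u, unitFlow_swap d l, unitFlow_swap r d, unitFlow_swap u r]
  ring

theorem eq_zero_of_flowRule_four {β u r d l : ℤ} (hβ : |β| ≤ 1) (h : flowRule β 4 u r d l = 0) :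
    u = 0 ∧ r = 0 ∧ d = 0 ∧ l = 0 := by
  have aux : ∀ {β u r d l : ℤ}, β = 0 ∨ β = 1 → flowRule β 4 u r d l = 0 →
      u = 0 ∧ r = 0 ∧ d = 0 ∧ l = 0 := by
    intro β u r d l hβ h
    unfold flowRule unitFlow at h
    rcases hβ with rfl | rfl <;> grind
  rw [abs_le] at hβ
  by_cases hβ0 : 0 ≤ β
  · exact aux (by omega) h
  · obtain ⟨hu, hl, hd, hr⟩ := aux (β := -β) (u := u) (r := l) (d := d) (l := r) (by omega)
      (by rwa [← flowRule_reflect])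
    exact ⟨hu, hr, hd, hl⟩

theorem eq_four_of_flowRule_mid {β c u d l : ℤ} (hβ : β = 0 ∨ β = 1) (hc : 0 < c) (hc' : c < 4)
    (hl : l ≠ 4)     (h : flowRule β c u 0 d l = 0) : u = 4 := by
  unfold flowRule unitFlow at h
  rcases hβ with rfl | rfl <;> grind

theorem mid_of_flowRule_zero {β u d : ℤ} (hβ : β = 0 ∨ β = 1)
    (h : flowRule β 0 u 4 d 0 = 0) : u ≠ 0 ∧ u ≠ 4 := by
  unfold flowRule unitFlow at h
  rcases hβ with rfl | rfl <;> grind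

theorem progression_of_step_ne_zero {Q : Finset ℤ} (hcard : Q.card = 5) {c x k : ℤ} (hk : k ≠ 0)
    (hc : ∀ i, 0 ≤ i → i ≤ 4 → c + k * i ∈ Q) (hx : ∀ i, 0 ≤ i → i ≤ 4 → x - k * i ∈ Q) :
    (∀ y, y ∈ Q ↔ ∃ i, 0 ≤ i ∧ i ≤ 4 ∧ y = c + k * i) ∧ x = c + 4 * k := by
  have hinj : Function.Injective fun i : ℤ => c + k * i := fun i j hij => by
    simpa [hk] using hij
  have himg : (Finset.Icc (0 : ℤ) 4).image (fun i => c + k * i) = Q := by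
    apply Finset.eq_of_subset_of_card_le
    · intro y hy
      simp only [Finset.mem_image, Finset.mem_Icc] at hy
      obtain ⟨i, hi, rfl⟩ := hy
      exact hc i hi.1 hi.2
    · rw [Finset.card_image_of_injective _ hinj, hcard]
      simp
  have hQ : ∀ y, y ∈ Q ↔ ∃ i, 0 ≤ i ∧ i ≤ 4 ∧ y = c + k * i := by
    intro y
    rw [← himg]
    simp only [Finset.mem_image, Finset.mem_Icc, and_assoc, eq_comm]
  refine ⟨hQ, ?_⟩
  obtain ⟨j, hj0, hj4, hj⟩ := (hQ x).1 (by simpa using hx 0 le_rfl (by norm_num))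
  obtain ⟨j', hj0', hj4', hj'⟩ := (hQ _).1 (hx 4 (by norm_num) le_rfl)
  have : k * (j - 4 - j') = 0 := by linear_combination hj' - hj
  have : j = 4 := by
    rcases mul_eq_zero.1 this with h | h
    · exact absurd h hk
    · omega
  rw [hj, this]; ring

theorem trivial_or_flowRule (Q : Finset ℤ) (hcard : Q.card = 5)
    (q : ℤ) (hq : q ∈ Q) (f : ℤ → ℤ → ℤ → ℤ → ℤ → ℤ)
    (hclose : ∀ c ∈ Q, ∀ u ∈ Q, ∀ r ∈ Q, ∀ d ∈ Q, ∀ l ∈ Q, f c u r d l ∈ Q)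
    (hrot : ∀ c u r d l, c ∈ Q → u ∈ Q → r ∈ Q → d ∈ Q → l ∈ Q →
      f c u r d l = f c r d l u)
    (hquiet : f q q q q q = q)
    (hNC : ∀ C : ℤ × ℤ → ℤ, (∀ p, C p ∈ Q) → {p | C p ≠ q}.Finite →
      ∑ᶠ p, (glob f C p - C p) = 0) :
    (∀ c ∈ Q, ∀ u ∈ Q, ∀ r ∈ Q, ∀ d ∈ Q, ∀ l ∈ Q, f c u r d l = c) ∨
    ∃ a k β : ℤ, k ≠ 0 ∧ |β| ≤ 1 ∧ (∀ x, x ∈ Q ↔ ∃ i, 0 ≤ i ∧ i ≤ 4 ∧ x = a + k * i) ∧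
      q ≠ a + 4 * k ∧
      ∀ c u r d l, c ∈ Set.Icc (0 : ℤ) 4 → u ∈ Set.Icc (0 : ℤ) 4 → r ∈ Set.Icc (0 : ℤ) 4 →
        d ∈ Set.Icc (0 : ℤ) 4 → l ∈ Set.Icc (0 : ℤ) 4 →
        f (a + k * c) (a + k * u) (a + k * r) (a + k * d) (a + k * l)
          = a + k * flowRule β c u r d l := by
  obtain ⟨g, h, hg, hh, hf⟩ := exists_flows Q q hq f hrot hquiet hNC
  have hg0 : ∀ x ∈ Q, g x x = 0 := fun x hx => by linarith [hg x hx x hx]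
  have hh0 : ∀ x ∈ Q, h x x = 0 := fun x hx => by linarith [hh x hx x hx]
  by_cases hgz : ∀ x ∈ Q, ∀ y ∈ Q, g x y = 0
  · left
    intro c hc u hu r hr d hd l hl
    have hne : Q.Nonempty := ⟨q, hq⟩
    have hm := Q.min'_mem hne
    have e1 := hf _ hm u hu r hr d hd l hl
    have e2 := hf _ hm l hl d hd r hr u hu
    have i1 := Q.min'_le _ (hclose _ hm u hu r hr d hd l hl)
    have i2 := Q.min'_le _ (hclose _ hm l hl d hd r hr u hu)
    rw [hf c hc u hu r hr d hd l hl]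
    simp only [hgz _ hm _ hu, hgz _ hm _ hr, hgz _ hm _ hd, hgz _ hm _ hl] at e1 e2
    simp only [hgz _ hc _ hu, hgz _ hc _ hr, hgz _ hc _ hd, hgz _ hc _ hl]
    linarith [hh u hu r hr, hh r hr d hd, hh d hd l hl, hh l hl u hu]
  right
  have hmul : ∀ x ∈ Q, ∀ y ∈ Q, ∀ i, 0 ≤ i → i ≤ 4 → x + g x y * i ∈ Q := by
    intro x hx y hy i hi0 hi4
    have h1 := hh x hx y hy
    have h2 := hg0 x hx
    have h3 := hh0 x hx
    have h4 := hh0 y hy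
    obtain rfl | rfl | rfl | rfl | rfl : i = 0 ∨ i = 1 ∨ i = 2 ∨ i = 3 ∨ i = 4 := by omega
    · simpa using hx
    · convert hclose x hx y hy x hx x hx x hx using 1
      rw [hf x hx y hy x hx x hx x hx]; linarith
    · convert hclose x hx y hy y hy x hx x hx using 1
      rw [hf x hx y hy y hy x hx x hx]; linarith
    · convert hclose x hx y hy y hy y hy x hx using 1
      rw [hf x hx y hy y hy y hy x hx]; linarith
    · convert hclose x hx y hy y hy y hy y hy using 1
      rw [hf x hx y hy y hy y hy y hy]; linarith
  have hprog : ∀ x ∈ Q, ∀ y ∈ Q, g x y ≠ 0 →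
      (∀ z, z ∈ Q ↔ ∃ i, 0 ≤ i ∧ i ≤ 4 ∧ z = x + g x y * i) ∧ y = x + 4 * g x y := by
    intro x hx y hy hxy
    refine progression_of_step_ne_zero hcard hxy (hmul x hx y hy) fun i hi0 hi4 => ?_
    convert hmul y hy x hx i hi0 hi4 using 1
    linear_combination -i * hg x hx y hy
  obtain ⟨a, ha, b, hb, hab, hqb⟩ : ∃ a ∈ Q, ∃ b ∈ Q, g a b ≠ 0 ∧ q ≠ b := by
    push Not at hgz
    obtain ⟨a, ha, b, hb, hab⟩ := hgz
    by_cases hqb : q = b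
    · refine ⟨b, hb, a, ha, fun h0 => hab (by linarith [hg a ha b hb]), ?_⟩
      rintro rfl
      exact hab (hqb ▸ hg0 q hq)
    · exact ⟨a, ha, b, hb, hab, hqb⟩
  obtain ⟨hQ, hbk⟩ := hprog a ha b hb hab
  generalize hk : g a b = k at hab hQ hbk
  have hmem : ∀ i ∈ Set.Icc (0 : ℤ) 4, a + k * i ∈ Q := fun i hi => (hQ _).2 ⟨i, hi.1, hi.2, rfl⟩
  have hgk : ∀ i ∈ Set.Icc (0 : ℤ) 4, ∀ j ∈ Set.Icc (0 : ℤ) 4,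
      g (a + k * i) (a + k * j) = k * unitFlow i j := by
    intro i hi j hj
    by_cases h04 : i = 0 ∧ j = 4
    · obtain ⟨rfl, rfl⟩ := h04
      rw [mul_zero, add_zero, mul_comm k 4, ← hbk, hk]; simp [unitFlow]
    by_cases h40 : i = 4 ∧ j = 0
    · obtain ⟨rfl, rfl⟩ := h40
      rw [mul_zero, add_zero, mul_comm k 4, ← hbk]
      have : g b a = -k := by linarith [hg a ha b hb]
      rw [this]; simp [unitFlow]
    have hu : unitFlow i j = 0 := by unfold unitFlow; rw [if_neg h04, if_neg h40]
    rw [hu, mul_zero]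
    by_contra hne
    obtain ⟨-, h2⟩ := hprog _ (hmem i hi) _ (hmem j hj) hne
    obtain ⟨i', hi0, hi4, hi'⟩ := (hQ _).1
      (hmul _ (hmem i hi) _ (hmem j hj) 1 (by norm_num) (by norm_num))
    have e : g (a + k * i) (a + k * j) = k * (i' - i) := by linear_combination hi'
    have h3 : k * (j - i - 4 * (i' - i)) = 0 := by rw [e] at h2; linear_combination h2
    have h4 : i' ≠ i := by rintro rfl; exact hne (by rw [e]; ring)
    rcases mul_eq_zero.1 h3 with h | h
    · exact hab h
    · obtain ⟨_, _⟩ := hi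
      obtain ⟨_, _⟩ := hj
      omega
  set η : ℤ → ℤ → ℤ := fun i j => h (a + k * i) (a + k * j) with hη
  have hηs : ∀ i ∈ Set.Icc (0 : ℤ) 4, ∀ j ∈ Set.Icc (0 : ℤ) 4, η i j + η j i = 0 :=
    fun i hi j hj => hh _ (hmem i hi) _ (hmem j hj)
  have hrange : ∀ c ∈ Set.Icc (0 : ℤ) 4, ∀ x ∈ Set.Icc (0 : ℤ) 4, ∀ y ∈ Set.Icc (0 : ℤ) 4,
      unitFlow c x = 0 → unitFlow c y = 0 → unitFlow c 1 = 0 →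
      ∃ n, 0 ≤ n ∧ n ≤ 4 ∧ η x y + η y 1 + η 1 x = k * (n - c) := by
    intro c hc x hx y hy h1 h2 h3
    have h1Q : (1 : ℤ) ∈ Set.Icc (0 : ℤ) 4 := by constructor <;> norm_num
    have e := hf _ (hmem c hc) _ (hmem x hx) _ (hmem y hy) _ (hmem 1 h1Q) _ (hmem 1 h1Q)
    obtain ⟨n, hn0, hn4, hn⟩ := (hQ _).1
      (hclose _ (hmem c hc) _ (hmem x hx) _ (hmem y hy) _ (hmem 1 h1Q) _ (hmem 1 h1Q))
    rw [hgk c hc x hx, hgk c hc y hy, hgk c hc 1 h1Q, h1, h2, h3, hh0 _ (hmem 1 h1Q), hn] at e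
    exact ⟨n, hn0, hn4, by simp only [hη]; linear_combination -e⟩
  have hpm : ∀ c ∈ Set.Icc (0 : ℤ) 4, ∀ x ∈ Set.Icc (0 : ℤ) 4, ∀ y ∈ Set.Icc (0 : ℤ) 4,
      unitFlow c x = 0 → unitFlow c y = 0 → unitFlow c 1 = 0 →
      ∃ n, |n| ≤ c ∧ |n| ≤ 4 - c ∧ η x y + η y 1 + η 1 x = k * n := by
    intro c hc x hx y hy h1 h2 h3
    have h1Q : (1 : ℤ) ∈ Set.Icc (0 : ℤ) 4 := by constructor <;> norm_num
    obtain ⟨n, hn0, hn4, hn⟩ := hrange c hc x hx y hy h1 h2 h3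
    obtain ⟨n', hn0', hn4', hn'⟩ := hrange c hc y hy x hx h2 h1 h3
    have e : k * (n + n' - 2 * c) = 0 := by
      linear_combination hηs x hx y hy + hηs y hy 1 h1Q + hηs 1 h1Q x hx - hn - hn'
    have e' : n + n' - 2 * c = 0 := (mul_eq_zero.1 e).resolve_left hab
    exact ⟨n - c, by rw [abs_le]; constructor <;> linarith,
      by rw [abs_le]; constructor <;> linarith, hn⟩
  have h0Q : (0 : ℤ) ∈ Set.Icc (0 : ℤ) 4 := by constructor <;> norm_num
  have h1Q : (1 : ℤ) ∈ Set.Icc (0 : ℤ) 4 := by constructor <;> norm_num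
  have h4Q : (4 : ℤ) ∈ Set.Icc (0 : ℤ) 4 := by constructor <;> norm_num
  obtain ⟨β, hβ, -, hβη⟩ := hpm 1 h1Q 0 h0Q 4 h4Q (by simp [unitFlow]) (by simp [unitFlow])
    (by simp [unitFlow])
  have hηβ : ∀ x ∈ Set.Icc (0 : ℤ) 4, ∀ y ∈ Set.Icc (0 : ℤ) 4,
      η x y + η y 1 + η 1 x = k * (β * unitFlow x y) := by
    intro x hx y hy
    by_cases h04 : x = 0 ∧ y = 4
    · obtain ⟨rfl, rfl⟩ := h04
      rw [hβη]; simp [unitFlow]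
    by_cases h40 : x = 4 ∧ y = 0
    · obtain ⟨rfl, rfl⟩ := h40
      have : unitFlow 4 0 = -1 := by simp [unitFlow]
      rw [this]
      linear_combination hηs 0 h0Q 4 h4Q + hηs 4 h4Q 1 h1Q + hηs 1 h1Q 0 h0Q - hβη
    have hu : unitFlow x y = 0 := by unfold unitFlow; rw [if_neg h04, if_neg h40]
    have hcase : (x ≠ 4 ∧ y ≠ 4) ∨ (x ≠ 0 ∧ y ≠ 0) ∨ x = y := by
      omega
    rw [hu, mul_zero, mul_zero]
    rcases hcase with ⟨hx4, hy4⟩ | ⟨hx0, hy0⟩ | rfl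
    · obtain ⟨n, hn, -, e⟩ := hpm 0 h0Q x hx y hy (by simp [unitFlow, hx4])
        (by simp [unitFlow, hy4]) (by simp [unitFlow])
      have hn0 : n = 0 := abs_nonpos_iff.1 hn
      rw [e, hn0, mul_zero]
    · obtain ⟨n, -, hn, e⟩ := hpm 4 h4Q x hx y hy (by simp [unitFlow, hx0])
        (by simp [unitFlow, hy0]) (by simp [unitFlow])
      have hn0 : n = 0 := abs_nonpos_iff.1 (by simpa using hn)
      rw [e, hn0, mul_zero]
    · linarith [hηs x hx x hx, hηs x hx 1 h1Q]
  refine ⟨a, k, β, hab, hβ, hQ, hbk ▸ hqb, ?_⟩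
  intro c u r d l hc hu hr hd hl
  rw [hf _ (hmem c hc) _ (hmem u hu) _ (hmem r hr) _ (hmem d hd) _ (hmem l hl), hgk c hc u hu,
    hgk c hc r hr, hgk c hc d hd, hgk c hc l hl]
  change _ + (η u r + η r d + η d l + η l u) = _
  unfold flowRule
  linear_combination hηβ u hu r hr + hηβ r hr d hd + hηβ d hd l hl + hηβ l hl u hu
    - hηs u hu 1 h1Q - hηs r hr 1 h1Q - hηs d hd 1 h1Q - hηs l hl 1 h1Q

theorem flowRule_zero (β : ℤ) : flowRule β 0 0 0 0 0 = 0 := by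
  simp [flowRule, unitFlow]

/-- Horizontally finite row `B` between rows `U` and `D` that is about to become empty. -/
theorem dying_row_of_nonneg {β : ℤ} (hβ : β = 0 ∨ β = 1) {U B D : ℤ → ℤ}
    (hB : ∀ x, 0 ≤ B x ∧ B x ≤ 4) (hfin : {x | B x ≠ 0}.Finite) (hne : ∃ x, B x ≠ 0)
    (hdie : ∀ x, flowRule β (B x) (U x) (B (x + 1)) (D x) (B (x - 1)) = 0) :
    (∃ x, U x = 4 ∧ B x ≠ 0) ∨
      ((∀ x, B x = 0 ∨ (B x = 4 ∧ U x = 0 ∧ D x = 0)) ∧ ∃ x, U x ≠ 0 ∧ U x ≠ 4) := by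
  have hβ1 : |β| ≤ 1 := by rcases hβ with rfl | rfl <;> simp
  have h4 : ∀ x, B x = 4 → U x = 0 ∧ B (x + 1) = 0 ∧ D x = 0 ∧ B (x - 1) = 0 := fun x hx =>
    eq_zero_of_flowRule_four hβ1 (by simpa [hx] using hdie x)
  by_cases hmid : ∃ x, B x ≠ 0 ∧ B x ≠ 4
  · left
    obtain ⟨x, hx, hmax⟩ := Set.exists_max_image {x | B x ≠ 0 ∧ B x ≠ 4} id
      (hfin.subset fun x hx => hx.1) hmid
    have hr : B (x + 1) = 0 := by
      by_contra h
      by_cases h' : B (x + 1) = 4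
      · have := (h4 _ h').2.2.2
        rw [add_sub_cancel_right] at this
        exact hx.1 this
      · have := hmax (x + 1) ⟨h, h'⟩
        simp at this
    have hl : B (x - 1) ≠ 4 := by
      intro h
      have := (h4 _ h).2.1
      rw [sub_add_cancel] at this
      exact hx.1 this
    have hd := hdie x
    rw [hr] at hd
    obtain ⟨h1, h2⟩ := hB x
    exact ⟨x, eq_four_of_flowRule_mid hβ (lt_of_le_of_ne h1 (Ne.symm hx.1))
      (lt_of_le_of_ne h2 hx.2) hl hd, hx.1⟩
  · right
    push Not at hmid
    refine ⟨fun x => ?_, ?_⟩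
    · by_cases hx : B x = 0
      · exact Or.inl hx
      · have := hmid x hx
        exact Or.inr ⟨this, (h4 x this).1, (h4 x this).2.2.1⟩
    · obtain ⟨x, hx, hmin⟩ := Set.exists_min_image {x | B x ≠ 0} id hfin hne
      have hx4 := hmid x hx
      have hl := (h4 x hx4).2.2.2
      have hll : B (x - 1 - 1) = 0 := by
        by_contra h
        have := hmin (x - 1 - 1) h
        simp at this
        omega
      have hd := hdie (x - 1)
      rw [hl, hll, sub_add_cancel, hx4] at hd
      exact ⟨x - 1, mid_of_flowRule_zero hβ hd⟩

theorem dying_row {β : ℤ} (hβ : |β| ≤ 1) {U B D : ℤ → ℤ}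
    (hB : ∀ x, 0 ≤ B x ∧ B x ≤ 4) (hfin : {x | B x ≠ 0}.Finite) (hne : ∃ x, B x ≠ 0)
    (hdie : ∀ x, flowRule β (B x) (U x) (B (x + 1)) (D x) (B (x - 1)) = 0) :
    (∃ x, U x = 4 ∧ B x ≠ 0) ∨
      ((∀ x, B x = 0 ∨ (B x = 4 ∧ U x = 0 ∧ D x = 0)) ∧ ∃ x, U x ≠ 0 ∧ U x ≠ 4) := by
  by_cases hβ0 : 0 ≤ β
  · rw [abs_le] at hβ
    exact dying_row_of_nonneg (by omega) hB hfin hne hdie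
  · rw [abs_le] at hβ
    have h := dying_row_of_nonneg (β := -β) (U := fun x => U (-x)) (B := fun x => B (-x))
      (D := fun x => D (-x)) (by omega) (fun x => hB _)
      (hfin.preimage (f := Neg.neg) neg_injective.injOn) (hne.imp' Neg.neg fun x hx => by simpa) ?_
    · rcases h with ⟨x, hx⟩ | ⟨h, x, hx⟩
      · exact Or.inl ⟨-x, hx⟩
      · exact Or.inr ⟨fun x => by simpa using h (-x), -x, hx⟩
    · intro x
      rw [← flowRule_reflect, show -(x + 1) = -x - 1 by ring, show -(x - 1) = -x + 1 by ring]
      exact hdie (-x)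

/-- The horizontal line at height `y` carries a nonzero state. -/
def RowAlive (S : ℤ × ℤ → ℤ) (y : ℤ) : Prop := ∃ x, S (x, y) ≠ 0

theorem RowAlive.above {β : ℤ} (hβ : |β| ≤ 1) {S : ℤ × ℤ → ℤ} (hS : ∀ p, 0 ≤ S p ∧ S p ≤ 4)
    (hfin : {p | S p ≠ 0}.Finite) {y : ℤ} (hy : RowAlive S y)
    (hdie : ¬ RowAlive (glob (flowRule β) S) y) : RowAlive (glob (flowRule β) S) (y + 1) := by
  have hrow : ∀ z, {x | S (x, z) ≠ 0}.Finite := fun z =>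
    hfin.preimage (f := fun x => (x, z)) fun a _ b _ hab => (Prod.mk.inj hab).1
  have hzero : ∀ z, ¬ RowAlive (glob (flowRule β) S) z → ∀ x, flowRule β (S (x, z))
      (S (x, z + 1)) (S (x + 1, z)) (S (x, z - 1)) (S (x - 1, z)) = 0 := fun z hz x => by
    by_contra h
    exact hz ⟨x, h⟩
  have hy0 := hzero y hdie
  by_contra hdie'
  have hy1 := hzero (y + 1) hdie'
  rw [add_sub_cancel_right] at hy1
  rcases dying_row hβ (U := fun x => S (x, y + 1)) (B := fun x => S (x, y))
    (D := fun x => S (x, y - 1)) (fun x => hS _) (hrow y) hy hy0 with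
    ⟨x, hx4, hx⟩ | ⟨hB, x, hx0, hx4⟩
  · have := hy1 x
    rw [hx4] at this
    exact hx (eq_zero_of_flowRule_four hβ this).2.2.1
  · rcases dying_row (β := -β) (by rwa [abs_neg]) (U := fun x => S (x, y))
      (B := fun x => S (x, y + 1)) (D := fun x => S (x, y + 1 + 1)) (fun x => hS _) (hrow (y + 1))
      ⟨x, hx0⟩ (fun x => by
        rw [← flowRule_reflect, flowRule_rotate, flowRule_rotate]
        exact hy1 x) with
      ⟨x', hx4', hx'⟩ | ⟨hB', -⟩
    · rcases hB x' with h | h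
      · omega
      · exact hx' h.2.1
    · rcases hB' x with h | h
      · exact hx0 h
      · exact hx4 h.1

theorem glob_comp_flip (β : ℤ) (S : ℤ × ℤ → ℤ) (p : ℤ × ℤ) :
    glob (flowRule (-β)) (fun p => S (p.1, -p.2)) p = glob (flowRule β) S (p.1, -p.2) := by
  simp only [glob]
  rw [← flowRule_reflect, flowRule_rotate, flowRule_rotate,
    show -(p.2 + 1) = -p.2 - 1 by ring, show -(p.2 - 1) = -p.2 + 1 by ring]

theorem glob_comp_swap (β : ℤ) (S : ℤ × ℤ → ℤ) (p : ℤ × ℤ) :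
    glob (flowRule (-β)) (fun p => S p.swap) p = glob (flowRule β) S p.swap := by
  simp only [glob, Prod.swap]
  rw [← flowRule_reflect]
  exact flowRule_rotate β _ _ _ _ _

theorem RowAlive.below {β : ℤ} (hβ : |β| ≤ 1) {S : ℤ × ℤ → ℤ} (hS : ∀ p, 0 ≤ S p ∧ S p ≤ 4)
    (hfin : {p | S p ≠ 0}.Finite) {y : ℤ} (hy : RowAlive S y)
    (hdie : ¬ RowAlive (glob (flowRule β) S) y) : RowAlive (glob (flowRule β) S) (y - 1) := by
  have key : ∀ z, RowAlive (glob (flowRule (-β)) (fun p => S (p.1, -p.2))) z ↔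
      RowAlive (glob (flowRule β) S) (-z) := fun z => by
    simp only [RowAlive, glob_comp_flip]
  have h := RowAlive.above (β := -β) (by rwa [abs_neg]) (S := fun p => S (p.1, -p.2))
    (fun p => hS _)
    (hfin.preimage (f := fun p : ℤ × ℤ => (p.1, -p.2)) fun a _ b _ hab => by
      simpa [Prod.ext_iff] using hab) (y := -y) (by simpa [RowAlive] using hy)
    (by rwa [key, neg_neg])
  rwa [key, show -(-y + 1) = y - 1 by ring] at h

theorem RowAlive.of_glob {β : ℤ} {S : ℤ × ℤ → ℤ} {y : ℤ} (h : RowAlive (glob (flowRule β) S) y) :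
    RowAlive S y ∨ RowAlive S (y - 1) ∨ RowAlive S (y + 1) := by
  by_contra! hc
  simp only [RowAlive, not_exists, not_not] at hc
  obtain ⟨x, hx⟩ := h
  apply hx
  simp only [glob]
  rw [hc.1, hc.1, hc.1, hc.2.1, hc.2.2, flowRule_zero]

/-- A line that has once been visited always keeps a neighbor, or itself, visited. -/
theorem RowAlive.exists_near {β : ℤ} (hβ : |β| ≤ 1) {S : ℕ → ℤ × ℤ → ℤ}
    (hstep : ∀ t, S (t + 1) = glob (flowRule β) (S t)) (hS : ∀ t p, 0 ≤ S t p ∧ S t p ≤ 4)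
    (hfin : ∀ t, {p | S t p ≠ 0}.Finite) {s t : ℕ} (hst : s ≤ t) {y : ℤ}
    (hy : RowAlive (S s) y) : ∃ z, |z - y| ≤ 1 ∧ RowAlive (S t) z := by
  induction t, hst using Nat.le_induction with
  | base => exact ⟨y, by simp, hy⟩
  | succ t _ ih =>
    obtain ⟨z, hz, hzt⟩ := ih
    by_cases hdie : RowAlive (S (t + 1)) z
    · exact ⟨z, hz, hdie⟩
    · rw [hstep] at hdie ⊢
      have ha := hzt.above hβ (hS t) (hfin t) hdie
      have hb := hzt.below hβ (hS t) (hfin t) hdie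
      rw [abs_le] at hz
      obtain h | h | h : z = y ∨ z = y - 1 ∨ z = y + 1 := by omega
      · exact ⟨z + 1, by rw [h]; simp, ha⟩
      · exact ⟨z + 1, by rw [h]; simp, ha⟩
      · exact ⟨z - 1, by rw [h]; simp, hb⟩

theorem exists_rowAlive_of_lt {β : ℤ} {S : ℕ → ℤ × ℤ → ℤ}
    (hstep : ∀ t, S (t + 1) = glob (flowRule β) (S t)) {m : ℤ}
    (hm : ∀ y, RowAlive (S 0) y → y ≤ m) (t : ℕ) :
    ∀ y, RowAlive (S t) y → ∀ z, m < z → z ≤ y → ∃ s ≤ t, RowAlive (S s) z := by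
  induction t with
  | zero =>
    intro y hy z hz hzy
    linarith [hm y hy]
  | succ t ih =>
    intro y hy z hz hzy
    by_cases hzy' : z = y
    · exact ⟨t + 1, le_rfl, hzy' ▸ hy⟩
    rw [hstep] at hy
    have : ∃ y', z ≤ y' ∧ RowAlive (S t) y' := by
      rcases hy.of_glob with h | h | h
      · exact ⟨_, by omega, h⟩
      · exact ⟨_, by omega, h⟩
      · exact ⟨_, by omega, h⟩
    obtain ⟨y', hy', h⟩ := this
    obtain ⟨s, hs, hsz⟩ := ih y' h z hz hy'
    exact ⟨s, by omega, hsz⟩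

theorem height_bounded {β : ℤ} (hβ : |β| ≤ 1) {S : ℕ → ℤ × ℤ → ℤ}
    (hstep : ∀ t, S (t + 1) = glob (flowRule β) (S t)) (hS : ∀ t p, 0 ≤ S t p ∧ S t p ≤ 4)
    (hfin : ∀ t, {p | S t p ≠ 0}.Finite) {M : ℕ} (hM : ∀ t, {p | S t p ≠ 0}.ncard ≤ M) :
    ∃ N : ℤ, ∀ t p, S t p ≠ 0 → p.2 ≤ N := by
  obtain ⟨m, hm⟩ := ((hfin 0).image Prod.snd).bddAbove
  have hm' : ∀ y, RowAlive (S 0) y → y ≤ m := fun y ⟨x, hx⟩ => hm ⟨(x, y), hx, rfl⟩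
  refine ⟨m + 3 * M + 2, fun t p hp => ?_⟩
  by_contra! hlt
  have hnear : ∀ j : Fin (M + 1), ∃ q : ℤ × ℤ, |q.2 - (m + 2 + 3 * j)| ≤ 1 ∧ S t q ≠ 0 := by
    intro j
    obtain ⟨s, hs, hsz⟩ := exists_rowAlive_of_lt hstep hm' t p.2 ⟨p.1, hp⟩ (m + 2 + 3 * j)
      (by omega) (by omega)
    obtain ⟨z, hz, x, hx⟩ := RowAlive.exists_near hβ hstep hS hfin hs hsz
    exact ⟨(x, z), hz, hx⟩
  choose w hw hwS using hnear
  have hinj : Function.Injective w := by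
    intro i j hij
    have hi := abs_le.1 (hw i)
    have hj := abs_le.1 (hw j)
    rw [hij] at hi
    ext
    omega
  have hcard := Set.ncard_le_ncard (Set.range_subset_iff.2 hwS) (hfin t)
  rw [← Set.image_univ, Set.ncard_image_of_injective _ hinj, Set.ncard_univ,
    Nat.card_eq_fintype_card, Fintype.card_fin] at hcard
  have := hM t
  omega

theorem flowRule_bounded {β : ℤ} (hβ : |β| ≤ 1) {S : ℕ → ℤ × ℤ → ℤ}
    (hstep : ∀ t, S (t + 1) = glob (flowRule β) (S t)) (hS : ∀ t p, 0 ≤ S t p ∧ S t p ≤ 4)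
    (hfin : ∀ t, {p | S t p ≠ 0}.Finite) {M : ℕ} (hM : ∀ t, {p | S t p ≠ 0}.ncard ≤ M) :
    ∃ N : ℤ, ∀ t p, S t p ≠ 0 → |p.1| ≤ N ∧ |p.2| ≤ N := by
  have vertical : ∀ {β : ℤ} (_ : |β| ≤ 1) {S : ℕ → ℤ × ℤ → ℤ}
      (_ : ∀ t, S (t + 1) = glob (flowRule β) (S t)) (_ : ∀ t p, 0 ≤ S t p ∧ S t p ≤ 4)
      (_ : ∀ t, {p | S t p ≠ 0}.Finite) (_ : ∀ t, {p | S t p ≠ 0}.ncard ≤ M),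
      ∃ N : ℤ, ∀ t p, S t p ≠ 0 → |p.2| ≤ N := by
    intro β hβ S hstep hS hfin hM
    have hinj : Function.Injective fun p : ℤ × ℤ => (p.1, -p.2) := fun a b hab => by
      simpa [Prod.ext_iff] using hab
    obtain ⟨N₁, h₁⟩ := height_bounded hβ hstep hS hfin hM
    obtain ⟨N₂, h₂⟩ := height_bounded (β := -β) (by rwa [abs_neg])
      (S := fun t p => S t (p.1, -p.2)) (fun t => by
        funext p; rw [glob_comp_flip, hstep]) (fun t p => hS _ _)
      (fun t => (hfin t).preimage hinj.injOn)
      (fun t => (Set.ncard_preimage_of_injective_subset_range hinj fun p _ =>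
        ⟨(p.1, -p.2), by simp⟩).trans_le (hM t))
    refine ⟨max N₁ N₂, fun t p hp => abs_le.2 ⟨?_, (h₁ t p hp).trans (le_max_left _ _)⟩⟩
    have h3 := h₂ t (p.1, -p.2) (by simpa using hp)
    have h4 := le_max_right N₁ N₂
    simp only at h3
    omega
  obtain ⟨N₁, h₁⟩ := vertical hβ hstep hS hfin hM
  obtain ⟨N₂, h₂⟩ := vertical (β := -β) (by rwa [abs_neg])
    (S := fun t p => S t p.swap) (fun t => by
      funext p; rw [glob_comp_swap, hstep]) (fun t p => hS _ _)
    (fun t => (hfin t).preimage Prod.swap_injective.injOn)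
    (fun t => (Set.ncard_preimage_of_injective_subset_range Prod.swap_injective fun p _ =>
      ⟨p.swap, by simp⟩).trans_le (hM t))
  exact ⟨max N₁ N₂, fun t p hp => ⟨(h₂ t p.swap (by simpa using hp)).trans (le_max_right _ _),
    (h₁ t p hp).trans (le_max_left _ _)⟩⟩

theorem flowRule_mid_horizontal {β c : ℤ} (hc0 : c ≠ 0) (hc4 : c ≠ 4) (u d : ℤ) :
    flowRule β c u c d c = c := by
  unfold flowRule
  rw [unitFlow_mid (.inl ⟨hc0, hc4⟩), unitFlow_mid (.inl ⟨hc0, hc4⟩),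
    unitFlow_mid (.inl ⟨hc0, hc4⟩), unitFlow_mid (.inr (.inl ⟨hc0, hc4⟩)),
    unitFlow_mid (.inr (.inl ⟨hc0, hc4⟩))]
  ring

theorem flowRule_mid_vertical {β c : ℤ} (hc0 : c ≠ 0) (hc4 : c ≠ 4) (r l : ℤ) :
    flowRule β c c r c l = c := by
  rw [← flowRule_rotate]
  exact flowRule_mid_horizontal hc0 hc4 r l

theorem eq_of_outside_box {β c : ℤ} (hc0 : c ≠ 0) (hc4 : c ≠ 4) {S : ℤ × ℤ → ℤ} {N : ℤ}
    (hN : ∀ p, S p ≠ c → |p.1| ≤ N ∧ |p.2| ≤ N) (p : ℤ × ℤ)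
    (hp : glob (flowRule β) S p ≠ c) : |p.1| ≤ N ∧ |p.2| ≤ N := by
  have hout : ∀ p : ℤ × ℤ, N < |p.1| ∨ N < |p.2| → S p = c := fun p hp => by
    by_contra h
    have := hN p h
    omega
  by_contra hcon
  apply hp
  simp only [glob]
  by_cases h1 : N < |p.1|
  · rw [hout p (.inl h1), hout (p.1, p.2 + 1) (.inl h1), hout (p.1, p.2 - 1) (.inl h1),
      flowRule_mid_vertical hc0 hc4]
  · have h2 : N < |p.2| := by omega
    rw [hout p (.inr h2), hout (p.1 + 1, p.2) (.inr h2), hout (p.1 - 1, p.2) (.inr h2),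
      flowRule_mid_horizontal hc0 hc4]

theorem finite_glob_ne {f : ℤ → ℤ → ℤ → ℤ → ℤ → ℤ} {q : ℤ} (hquiet : f q q q q q = q)
    {C : ℤ × ℤ → ℤ} (hC : {p | C p ≠ q}.Finite) : {p | glob f C p ≠ q}.Finite := by
  have hshift : ∀ a b : ℤ, {p : ℤ × ℤ | C (p.1 + a, p.2 + b) ≠ q}.Finite := fun a b =>
    hC.preimage (f := fun p : ℤ × ℤ => (p.1 + a, p.2 + b)) fun p _ p' _ hpp => by
      simpa [Prod.ext_iff] using hpp
  refine ((((hC.union (hshift 0 1)).union (hshift 1 0)).union (hshift 0 (-1))).union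
    (hshift (-1) 0)).subset fun p hp => ?_
  by_contra hcon
  simp only [Set.mem_union, Set.mem_ofPred_eq, not_or, not_not, add_zero,
    ← sub_eq_add_neg] at hcon
  apply hp
  simp only [glob]
  rw [hcon.1.1.1.1, hcon.1.1.1.2, hcon.1.1.2, hcon.1.2, hcon.2, hquiet]

theorem exists_lt_eq_of_bounded {Q : Finset ℤ} {q N : ℤ} {D : ℕ → ℤ × ℤ → ℤ}
    (hQ : ∀ t p, D t p ∈ Q) (hN : ∀ t p, D t p ≠ q → |p.1| ≤ N ∧ |p.2| ≤ N) :
    ∃ i j : ℕ, i < j ∧ D i = D j := by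
  let box : Finset (ℤ × ℤ) := Finset.Icc (-N) N ×ˢ Finset.Icc (-N) N
  let φ : ℕ → (box → Q) := fun t p => ⟨D t p, hQ t p⟩
  obtain ⟨i, j, hij, h⟩ := Finite.exists_ne_map_eq_of_infinite φ
  have hD : D i = D j := by
    funext p
    by_cases hp : p ∈ box
    · exact congrArg Subtype.val (congrFun h ⟨p, hp⟩)
    · have hq : ∀ t, D t p = q := fun t => by
        by_contra hne
        have := hN t p hne
        exact hp (by simpa [box, abs_le] using this)
      rw [hq, hq]
  rcases lt_or_gt_of_ne hij with hlt | hlt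
  · exact ⟨i, j, hlt, hD⟩
  · exact ⟨j, i, hlt, hD.symm⟩

theorem ncard_support_le_finsum {S : ℤ × ℤ → ℤ} (hS : ∀ p, 0 ≤ S p)
    (hfin : {p | S p ≠ 0}.Finite) : {p | S p ≠ 0}.ncard ≤ (∑ᶠ p, S p).toNat := by
  rw [Set.ncard_eq_toFinset_card _ hfin,
    finsum_eq_sum_of_support_subset S (s := hfin.toFinset) (by simp [Function.support])]
  have : (hfin.toFinset.card : ℤ) ≤ ∑ p ∈ hfin.toFinset, S p := by
    rw [Finset.card_eq_sum_ones]
    push_cast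
    refine Finset.sum_le_sum fun p hp => ?_
    have h1 : S p ≠ 0 := by simpa using hp
    have h2 := hS p
    omega
  omega

/-- The evolution of any 5-state rotation-symmetric number-conserving CA on the
von Neumann neighborhood from a finite initial configuration is ultimately periodic. -/
theorem five_state_RNCA_ultimately_periodic (Q : Finset ℤ) (hcard : Q.card = 5)
    (q₀ : ℤ) (hq₀ : q₀ ∈ Q) (f : ℤ → ℤ → ℤ → ℤ → ℤ → ℤ)
    (hclose : ∀ c ∈ Q, ∀ u ∈ Q, ∀ r ∈ Q, ∀ d ∈ Q, ∀ l ∈ Q, f c u r d l ∈ Q)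
    (hrot : ∀ c u r d l, c ∈ Q → u ∈ Q → r ∈ Q → d ∈ Q → l ∈ Q →
      f c u r d l = f c r d l u)
    (hquiet : f q₀ q₀ q₀ q₀ q₀ = q₀)
    (hNC : ∀ C : ℤ × ℤ → ℤ, (∀ p, C p ∈ Q) → {p | C p ≠ q₀}.Finite →
      ∑ᶠ p, (glob f C p - C p) = 0)
    (C : ℤ × ℤ → ℤ) (hCQ : ∀ p, C p ∈ Q) (hCfin : {p | C p ≠ q₀}.Finite) :
    ∃ i j : ℕ, i < j ∧ (glob f)^[i] C = (glob f)^[j] C := by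
  set D : ℕ → ℤ × ℤ → ℤ := fun t => (glob f)^[t] C with hD
  have hDstep : ∀ t, D (t + 1) = glob f (D t) := fun t => Function.iterate_succ_apply' _ _ _
  have hDQ : ∀ t p, D t p ∈ Q := by
    intro t
    induction t with
    | zero => exact hCQ
    | succ t ih =>
      intro p
      rw [hDstep]
      exact hclose _ (ih _) _ (ih _) _ (ih _) _ (ih _) _ (ih _)
  have hDfin : ∀ t, {p | D t p ≠ q₀}.Finite := by
    intro t
    induction t with
    | zero => exact hCfin
    | succ t ih =>
      rw [hDstep]
      exact finite_glob_ne hquiet ih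
  rcases trivial_or_flowRule Q hcard q₀ hq₀ f hclose hrot hquiet hNC with
    htriv | ⟨a, k, β, hk, hβ, hQ, hq4, hrule⟩
  · refine ⟨0, 1, one_pos, ?_⟩
    funext p
    exact (htriv _ (hCQ _) _ (hCQ _) _ (hCQ _) _ (hCQ _) _ (hCQ _)).symm
  have hcoord : ∀ t p, ∃ i, (0 ≤ i ∧ i ≤ 4) ∧ D t p = a + k * i := fun t p => by
    obtain ⟨i, h0, h4, h⟩ := (hQ _).1 (hDQ t p)
    exact ⟨i, ⟨h0, h4⟩, h⟩
  choose S hS hDS using hcoord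
  have hcancel : ∀ i j : ℤ, a + k * i = a + k * j ↔ i = j := fun i j => by simp [hk]
  have hstep : ∀ t, S (t + 1) = glob (flowRule β) (S t) := by
    intro t
    funext p
    rw [← hcancel, ← hDS, hDstep]
    simp only [glob, hDS]
    exact hrule _ _ _ _ _ (hS _ _) (hS _ _) (hS _ _) (hS _ _) (hS _ _)
  obtain ⟨i, hi0, hi4, hqi⟩ := (hQ q₀).1 hq₀
  have hne : ∀ t p, D t p ≠ q₀ ↔ S t p ≠ i := fun t p => by rw [hDS, hqi, Ne, hcancel]
  simp only [hne] at hDfin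
  suffices ∃ N : ℤ, ∀ t p, S t p ≠ i → |p.1| ≤ N ∧ |p.2| ≤ N by
    obtain ⟨N, hN⟩ := this
    exact exists_lt_eq_of_bounded hDQ (q := q₀) fun t p h => hN t p ((hne t p).1 h)
  by_cases hi : i = 0
  · subst hi
    have hsum : ∀ t, ∑ᶠ p, S t p = ∑ᶠ p, S 0 p := by
      intro t
      induction t with
      | zero => rfl
      | succ t ih =>
        have hcons := hNC (D t) (hDQ t) (by simpa only [hne] using hDfin t)
        rw [← hDstep] at hcons
        have hterm : ∀ p, D (t + 1) p - D t p = k * (S (t + 1) p - S t p) := fun p => by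
          rw [hDS, hDS]; ring
        simp only [hterm] at hcons
        rw [← mul_finsum, finsum_sub_distrib (hDfin _) (hDfin _), mul_eq_zero] at hcons
        rw [← ih]
        exact sub_eq_zero.1 (hcons.resolve_left hk)
    refine flowRule_bounded hβ hstep hS hDfin (M := (∑ᶠ p, S 0 p).toNat) fun t => ?_
    rw [← hsum t]
    exact ncard_support_le_finsum (fun p => (hS t p).1) (hDfin t)
  · have hi4' : i ≠ 4 := by
      rintro rfl
      exact hq4 (by rw [hqi, mul_comm])
    obtain ⟨N₁, h₁⟩ := ((hDfin 0).image fun p => |p.1|).bddAbove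
    obtain ⟨N₂, h₂⟩ := ((hDfin 0).image fun p => |p.2|).bddAbove
    refine ⟨max N₁ N₂, fun t => ?_⟩
    induction t with
    | zero =>
      exact fun p hp => ⟨(h₁ ⟨p, hp, rfl⟩).trans (le_max_left _ _),
        (h₂ ⟨p, hp, rfl⟩).trans (le_max_right _ _)⟩
    | succ t ih =>
      rw [hstep]
      exact eq_of_outside_box hi hi4' ih
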